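/- arXiv:1511.05910 — 2 statements merged into one kernel-verified Lean document; each statement's English description precedes it below -/
import Mathlib

section
/- (Lemma 5.7 (iii)) Let u : Θ → ℝ be bounded and d_p-uniformly continuous, n ≥ 1, and λ_i a fixed partition-jump datum. Then u^{n,λ_i} is lower semicontinuous at the initial time s_i: for every x ∈ ℝ^d, u^{n,λ_i}(s_i, x) ≤ liminf_{s' ↓ s_i, x' → x} u^{n,λ_i}(s', x'). -/
open MeasureTheory Set Filter Topology

noncomputable section

/-- `ℝ^d` with the Euclidean norm. -/
abbrev E (d : ℕ) := EuclideanSpace ℝ (Fin d)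

/-- A point `θ = (t, ω)` of `Θ = [0,T] × Ω`, where `Ω` is the set of continuous
paths `[0,T] → ℝ^d` starting from the origin. -/
structure Theta (T : ℝ) (d : ℕ) where
  t : ℝ
  path : ℝ → E d
  ht : t ∈ Set.Icc 0 T
  cont : ContinuousOn path (Set.Icc 0 T)
  init : path 0 = 0

/-- `‖f‖_q^q := ‖f T‖^q + ∫_0^T ‖f s‖^q ds`. -/
def pnormPow (T q : ℝ) {d : ℕ} (f : ℝ → E d) : ℝ :=
  ‖f T‖ ^ q + ∫ s in (0:ℝ)..T, ‖f s‖ ^ q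

/-- `‖f‖_q := (‖f T‖^q + ∫_0^T ‖f s‖^q ds)^(1/q)`. -/
def pnorm (T q : ℝ) {d : ℕ} (f : ℝ → E d) : ℝ := (pnormPow T q f) ^ (1 / q)

/-- The pseudo-distance `d_p(θ,θ') = |t - t'| + ‖ω_{t∧·} - ω'_{t'∧·}‖_p`. -/
def dpDist (T p : ℝ) {d : ℕ} (θ θ' : Theta T d) : ℝ :=
  |θ.t - θ'.t| + pnorm T p (fun s => θ.path (min θ.t s) - θ'.path (min θ'.t s))

/-- The set `𝓛_{t,s}` of monotone time changes: for `s > 0`, nondecreasing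
`ℓ : [0,T] → ℝ` restricting to an increasing bijection from `[0,t]` onto `[0,s]`
with `ℓ(r) = r - t + s` on `(t,T]`; for `s = 0` the single function `ℓ^{t,0}`. -/
def LL (T t s : ℝ) : Set (ℝ → ℝ) :=
  if s = 0 then {fun r => if r ≤ t then 0 else r - t}
  else {ℓ | MonotoneOn ℓ (Set.Icc 0 T) ∧ StrictMonoOn ℓ (Set.Icc 0 t) ∧
        Set.BijOn ℓ (Set.Icc 0 t) (Set.Icc 0 s) ∧ ∀ r ∈ Set.Ioc t T, ℓ r = r - t + s}

/-- `‖ℓ - I‖_∞ := sup_{0 ≤ r ≤ T} |ℓ(r) - r|`. -/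
def supId (T : ℝ) (ℓ : ℝ → ℝ) : ℝ := ⨆ r : Set.Icc (0:ℝ) T, |ℓ r - (r : ℝ)|

/-- The penalization `Φ(s,η,θ,ℓ) := ‖ℓ - I‖_∞^{2/(3p+3)} + ‖η_{s∧ℓ(·)} - ω_{t∧·}‖_{p+1}^{p+1}`. -/
def Phi (T p : ℝ) {d : ℕ} (s : ℝ) (η : ℝ → E d) (θ : Theta T d) (ℓ : ℝ → ℝ) : ℝ :=
  (supId T ℓ) ^ (2 / (3 * p + 3)) +
    pnormPow T (p + 1) (fun r => η (min s (ℓ r)) - θ.path (min θ.t r))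

/-- The regularization
`u^n(s,η) := sup { u(θ) - n Φ(s,η,θ,ℓ) : θ ∈ Θ \ {𝟎}, ℓ ∈ 𝓛_{t,s} }`. -/
def reg (T p : ℝ) {d : ℕ} (u : Theta T d → ℝ) (n : ℕ) (s : ℝ) (η : ℝ → E d) : ℝ :=
  sSup { x | ∃ θ : Theta T d, ∃ ℓ : ℝ → ℝ, (θ.t, θ.path) ≠ (0, 0) ∧ ℓ ∈ LL T θ.t s ∧
        x = u θ - (n : ℝ) * Phi T p s η θ ℓ }

/-- A càdlàg path on `[0,T]`: right-continuous with left limits. -/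
def Cadlag (T : ℝ) {d : ℕ} (η : ℝ → E d) : Prop :=
  (∀ x ∈ Set.Ico (0:ℝ) T, ContinuousWithinAt η (Set.Ici x) x) ∧
  (∀ x ∈ Set.Ioc (0:ℝ) T, ∃ l : E d, Filter.Tendsto η (nhdsWithin x (Set.Iio x)) (𝓝 l))

/-- The piecewise constant path `η^{λ_i}(x)_s = Σ_j x_j 1_{{s ≥ s_j}}`. -/
def pcPath {d i : ℕ} (sVec : Fin i → ℝ) (xVec : Fin i → E d) : ℝ → E d :=
  fun r => ∑ j : Fin i, if sVec j ≤ r then xVec j else 0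

/-!
Given `a < u^n(s, η)`, pick `θ = (t, ω)` and `ℓ ∈ 𝓛_{t,s}` with `a < u θ - n Φ(s, η, θ, ℓ)`.

If `t = 0`, then `s = 0`, and replacing `θ` by the zero path at a small time `δ > 0` moves `θ` by
`δ` in `d_p` and raises `Φ` by at most `δ^{2/(3p+3)}`; so one may assume `t > 0`.

If `t > 0`, then for `s' > s` the time change `ℓ(r) + (s' - s) min(r, t) / t` belongs to
`𝓛_{t,s'}`. It decreases to `ℓ` uniformly as `s' ↓ s`, so right continuity of the paths and
dominated convergence make `Φ(s', η', θ, ·)` converge to `Φ(s, η, θ, ℓ)`.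
-/

section MonotoneSurjection

variable {α β : Type*} [LinearOrder α] [LinearOrder β] {f : α → β} {a b : α} {c d : β}

theorem apply_left_of_monotoneOn_of_image_Icc (hab : a ≤ b) (hcd : c ≤ d)
    (hf : MonotoneOn f (Icc a b)) (himage : f '' Icc a b = Icc c d) : f a = c :=
  (hf.map_isLeast (isLeast_Icc hab)).unique (himage ▸ isLeast_Icc hcd)

theorem apply_right_of_monotoneOn_of_image_Icc (hab : a ≤ b) (hcd : c ≤ d)
    (hf : MonotoneOn f (Icc a b)) (himage : f '' Icc a b = Icc c d) : f b = d :=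
  (hf.map_isGreatest (isGreatest_Icc hab)).unique (himage ▸ isGreatest_Icc hcd)

theorem continuousOn_of_monotoneOn_of_image_Icc [TopologicalSpace α] [OrderTopology α]
    [TopologicalSpace β] [OrderTopology β] [DenselyOrdered β] (hf : MonotoneOn f (Icc a b))
    (himage : f '' Icc a b = Icc c d) : ContinuousOn f (Icc a b) := by
  have hmaps : MapsTo f (Icc a b) (Icc c d) := mapsTo_iff_image_subset.2 himage.subset
  have hmono : Monotone hmaps.restrict := fun x y hxy => hf x.2 y.2 hxy
  have hsurj : Function.Surjective hmaps.restrict :=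
    (hmaps.restrict_surjective_iff).2 himage.superset
  exact continuousOn_iff_continuous_domRestrict.2
    (continuous_subtype_val.comp (hmono.continuous_of_surjective hsurj))

end MonotoneSurjection

section TimeChange

variable {T t s c : ℝ} {ℓ : ℝ → ℝ}

theorem mem_LL_zero : ℓ ∈ LL T t 0 ↔ ℓ = fun r => if r ≤ t then 0 else r - t := by
  simp [LL]

theorem apply_of_mem_LL_zero (hℓ : ℓ ∈ LL T t 0) (r : ℝ) : ℓ r = if r ≤ t then 0 else r - t :=
  congrFun (mem_LL_zero.1 hℓ) r

theorem mem_LL_of_pos (hs : 0 < s) : ℓ ∈ LL T t s ↔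
    MonotoneOn ℓ (Icc 0 T) ∧ StrictMonoOn ℓ (Icc 0 t) ∧
      BijOn ℓ (Icc 0 t) (Icc 0 s) ∧ ∀ r ∈ Ioc t T, ℓ r = r - t + s := by
  simp [LL, hs.ne']

theorem monotoneOn_of_mem_LL (hs : 0 ≤ s) (hℓ : ℓ ∈ LL T t s) : MonotoneOn ℓ (Icc 0 T) := by
  rcases hs.eq_or_lt with rfl | hs
  · intro r _ r' _ hrr'
    rw [apply_of_mem_LL_zero hℓ, apply_of_mem_LL_zero hℓ]
    split_ifs <;> linarith
  · exact ((mem_LL_of_pos hs).1 hℓ).1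

theorem image_Icc_of_mem_LL (ht : 0 ≤ t) (hs : 0 ≤ s) (hℓ : ℓ ∈ LL T t s) :
    ℓ '' Icc 0 t = Icc 0 s := by
  rcases hs.eq_or_lt with rfl | hs
  · have hzero : ∀ r ∈ Icc 0 t, ℓ r = 0 := fun r hr => by
      rw [apply_of_mem_LL_zero hℓ, if_pos hr.2]
    rw [image_congr hzero, (nonempty_Icc.2 ht).image_const, Icc_self]
  · exact ((mem_LL_of_pos hs).1 hℓ).2.2.1.image_eq

theorem apply_of_mem_LL (hs : 0 ≤ s) (hℓ : ℓ ∈ LL T t s) {r : ℝ} (hr : r ∈ Ioc t T) :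
    ℓ r = r - t + s := by
  rcases hs.eq_or_lt with rfl | hs
  · rw [apply_of_mem_LL_zero hℓ, if_neg hr.1.not_ge, add_zero]
  · exact ((mem_LL_of_pos hs).1 hℓ).2.2.2 r hr

theorem apply_zero_of_mem_LL (ht : t ∈ Icc 0 T) (hs : 0 ≤ s) (hℓ : ℓ ∈ LL T t s) : ℓ 0 = 0 :=
  apply_left_of_monotoneOn_of_image_Icc ht.1 hs
    ((monotoneOn_of_mem_LL hs hℓ).mono (Icc_subset_Icc_right ht.2))
    (image_Icc_of_mem_LL ht.1 hs hℓ)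

theorem apply_time_of_mem_LL (ht : t ∈ Icc 0 T) (hs : 0 ≤ s) (hℓ : ℓ ∈ LL T t s) : ℓ t = s :=
  apply_right_of_monotoneOn_of_image_Icc ht.1 hs
    ((monotoneOn_of_mem_LL hs hℓ).mono (Icc_subset_Icc_right ht.2))
    (image_Icc_of_mem_LL ht.1 hs hℓ)

theorem continuousOn_of_mem_LL (ht : t ∈ Icc 0 T) (hs : 0 ≤ s) (hℓ : ℓ ∈ LL T t s) :
    ContinuousOn ℓ (Icc 0 t) :=
  continuousOn_of_monotoneOn_of_image_Icc
    ((monotoneOn_of_mem_LL hs hℓ).mono (Icc_subset_Icc_right ht.2))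
    (image_Icc_of_mem_LL ht.1 hs hℓ)

theorem nonneg_of_mem_LL (ht : t ∈ Icc 0 T) (hs : 0 ≤ s) (hℓ : ℓ ∈ LL T t s) {r : ℝ}
    (hr : r ∈ Icc 0 T) : 0 ≤ ℓ r := by
  rw [← apply_zero_of_mem_LL ht hs hℓ]
  exact monotoneOn_of_mem_LL hs hℓ (left_mem_Icc.2 (hr.1.trans hr.2)) hr hr.1

theorem eq_zero_of_mem_LL_time_zero (hT : 0 ≤ T) (hs : 0 ≤ s) (hℓ : ℓ ∈ LL T 0 s) : s = 0 :=
  (apply_time_of_mem_LL (left_mem_Icc.2 hT) hs hℓ).symm.trans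
    (apply_zero_of_mem_LL (left_mem_Icc.2 hT) hs hℓ)

theorem mem_LL_of_strictMonoOn_of_continuousOn (ht : 0 ≤ t) (hs : 0 < s)
    (hmono : MonotoneOn ℓ (Icc 0 T)) (hstrict : StrictMonoOn ℓ (Icc 0 t))
    (hcont : ContinuousOn ℓ (Icc 0 t)) (hzero : ℓ 0 = 0) (htime : ℓ t = s)
    (htail : ∀ r ∈ Ioc t T, ℓ r = r - t + s) : ℓ ∈ LL T t s := by
  have hmaps : MapsTo ℓ (Icc 0 t) (Icc 0 s) := by
    simpa only [hzero, htime] using hstrict.monotoneOn.mapsTo_Icc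
  have hsurj : SurjOn ℓ (Icc 0 t) (Icc 0 s) := by
    simpa only [SurjOn, hzero, htime] using intermediate_value_Icc ht hcont
  exact (mem_LL_of_pos hs).2 ⟨hmono, hstrict, ⟨hmaps, hstrict.injOn, hsurj⟩, htail⟩

/-- The time change `ℓ` advanced by `c`: the extra time `c` is gained linearly over `[0, t]` and
kept afterwards. It carries `𝓛_{t,s}` into `𝓛_{t,s+c}`, including the degenerate case `s = 0`. -/
def advance (t c : ℝ) (ℓ : ℝ → ℝ) : ℝ → ℝ := fun r => ℓ r + c * (min r t / t)

theorem le_advance (ht : 0 < t) (hc : 0 ≤ c) {r : ℝ} (hr : 0 ≤ r) : ℓ r ≤ advance t c ℓ r :=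
  le_add_of_nonneg_right (mul_nonneg hc (div_nonneg (le_min hr ht.le) ht.le))

theorem advance_le (ht : 0 < t) (hc : 0 ≤ c) (r : ℝ) : advance t c ℓ r ≤ ℓ r + c :=
  add_le_add_right (mul_le_of_le_one_right hc ((div_le_one ht).2 (min_le_right r t))) _

theorem advance_of_le {r : ℝ} (ht : 0 < t) (hr : t ≤ r) : advance t c ℓ r = ℓ r + c := by
  rw [advance, min_eq_right hr, div_self ht.ne', mul_one]

theorem advance_mem_LL (ht : t ∈ Ioc 0 T) (hs : 0 ≤ s) (hc : 0 < c) (hℓ : ℓ ∈ LL T t s) :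
    advance t c ℓ ∈ LL T t (s + c) := by
  have htT : t ∈ Icc 0 T := Ioc_subset_Icc_self ht
  have hmono : MonotoneOn ℓ (Icc 0 T) := monotoneOn_of_mem_LL hs hℓ
  have hramp : Monotone fun r => c * (min r t / t) := fun r r' hrr' => by
    have := ht.1
    dsimp only
    gcongr
  refine mem_LL_of_strictMonoOn_of_continuousOn ht.1.le (by positivity)
    (hmono.add (hramp.monotoneOn _)) ?_ ?_ ?_ ?_ fun r hr => ?_
  · refine (hmono.mono (Icc_subset_Icc_right ht.2)).add_strictMono fun r hr r' hr' hrr' => ?_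
    rw [min_eq_left hr.2, min_eq_left hr'.2]
    exact mul_lt_mul_of_pos_left (div_lt_div_of_pos_right hrr' ht.1) hc
  · exact (continuousOn_of_mem_LL htT hs hℓ).add (by fun_prop)
  · rw [advance, apply_zero_of_mem_LL htT hs hℓ, min_eq_left ht.1.le, zero_div, mul_zero, add_zero]
  · rw [advance_of_le ht.1 le_rfl, apply_time_of_mem_LL htT hs hℓ]
  · rw [advance_of_le ht.1 hr.1.le, apply_of_mem_LL hs hℓ hr, add_assoc]

theorem LL_nonempty (ht : t ∈ Ioc 0 T) (hs : 0 ≤ s) : (LL T t s).Nonempty := by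
  rcases hs.eq_or_lt with rfl | hs
  · exact ⟨_, mem_LL_zero.2 rfl⟩
  · exact ⟨_, zero_add s ▸ advance_mem_LL ht le_rfl hs (mem_LL_zero.2 rfl)⟩

end TimeChange

section SupId

variable {T c : ℝ} {ℓ ℓ' : ℝ → ℝ}

theorem supId_nonneg (T : ℝ) (ℓ : ℝ → ℝ) : 0 ≤ supId T ℓ :=
  Real.iSup_nonneg fun _ => abs_nonneg _

theorem supId_le (hc : 0 ≤ c) (h : ∀ r ∈ Icc 0 T, |ℓ r - r| ≤ c) : supId T ℓ ≤ c :=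
  Real.iSup_le (fun r => h r r.2) hc

theorem abs_sub_le_supId (hℓ : MonotoneOn ℓ (Icc 0 T)) {r : ℝ} (hr : r ∈ Icc 0 T) :
    |ℓ r - r| ≤ supId T ℓ := by
  have hbdd : BddAbove (range fun r : Icc 0 T => |ℓ r - (r : ℝ)|) := by
    refine ⟨max |ℓ 0| |ℓ T| + T, ?_⟩
    rintro _ ⟨⟨r, hr⟩, rfl⟩
    have hT : 0 ≤ T := hr.1.trans hr.2
    calc |ℓ r - r| ≤ |ℓ r| + |r| := abs_sub _ _
      _ ≤ max |ℓ 0| |ℓ T| + T := by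
        refine add_le_add (abs_le_max_abs_abs ?_ ?_) (by rw [abs_of_nonneg hr.1]; exact hr.2)
        · exact hℓ (left_mem_Icc.2 hT) hr hr.1
        · exact hℓ hr (right_mem_Icc.2 hT) hr.2
  exact le_ciSup hbdd ⟨r, hr⟩

theorem supId_le_supId_add (hc : 0 ≤ c) (hℓ : MonotoneOn ℓ (Icc 0 T))
    (h : ∀ r ∈ Icc 0 T, |ℓ' r - ℓ r| ≤ c) : supId T ℓ' ≤ supId T ℓ + c :=
  supId_le (add_nonneg (supId_nonneg T ℓ) hc) fun r hr =>
    calc |ℓ' r - r| ≤ |ℓ' r - ℓ r| + |ℓ r - r| := abs_sub_le _ _ _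
      _ ≤ supId T ℓ + c := by linarith [h r hr, abs_sub_le_supId hℓ hr]

theorem abs_supId_sub_supId_le (hc : 0 ≤ c) (hℓ : MonotoneOn ℓ (Icc 0 T))
    (hℓ' : MonotoneOn ℓ' (Icc 0 T)) (h : ∀ r ∈ Icc 0 T, |ℓ' r - ℓ r| ≤ c) :
    |supId T ℓ' - supId T ℓ| ≤ c := by
  have hle := supId_le_supId_add hc hℓ h
  have hge := supId_le_supId_add hc hℓ' fun r hr => abs_sub_comm (ℓ r) (ℓ' r) ▸ h r hr
  exact abs_sub_le_iff.2 ⟨by linarith, by linarith⟩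

end SupId

section PnormPow

variable {T q : ℝ} {d : ℕ} {f g : ℝ → E d}

theorem pnormPow_nonneg (hT : 0 ≤ T) (q : ℝ) (f : ℝ → E d) : 0 ≤ pnormPow T q f :=
  add_nonneg (Real.rpow_nonneg (norm_nonneg _) q)
    (intervalIntegral.integral_nonneg hT fun _ _ => Real.rpow_nonneg (norm_nonneg _) q)

theorem pnormPow_congr (hT : 0 ≤ T) (h : EqOn f g (Icc 0 T)) : pnormPow T q f = pnormPow T q g := by
  rw [pnormPow, pnormPow, h (right_mem_Icc.2 hT)]
  congr 1
  refine intervalIntegral.integral_congr fun r hr => ?_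
  rw [uIcc_of_le hT] at hr
  simp only [h hr]

theorem pnorm_eq_zero_of_eqOn_zero (hT : 0 ≤ T) (hq : q ≠ 0) (h : EqOn f 0 (Icc 0 T)) :
    pnorm T q f = 0 := by
  rw [pnorm, pnormPow_congr hT h]
  simp [pnormPow, Real.zero_rpow hq, hq]

theorem tendsto_pnormPow {α : Type*} {F : Filter α} [F.IsCountablyGenerated] {f : α → ℝ → E d}
    (hT : 0 ≤ T) (hq : 0 ≤ q)
    (hmeas : ∀ᶠ k in F, AEStronglyMeasurable (f k) (volume.restrict (Ioc 0 T)))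
    {K : ℝ} (hbound : ∀ᶠ k in F, ∀ r ∈ Icc 0 T, ‖f k r‖ ≤ K)
    (hlim : ∀ r ∈ Icc 0 T, Tendsto (fun k => f k r) F (𝓝 (g r))) :
    Tendsto (fun k => pnormPow T q (f k)) F (𝓝 (pnormPow T q g)) := by
  have hlim_pow : ∀ r ∈ Icc 0 T, Tendsto (fun k => ‖f k r‖ ^ q) F (𝓝 (‖g r‖ ^ q)) :=
    fun r hr => (hlim r hr).norm.rpow_const (Or.inr hq)
  refine (hlim_pow T (right_mem_Icc.2 hT)).add
    (intervalIntegral.tendsto_integral_filter_of_dominated_convergence (fun _ => K ^ q)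
      ?_ ?_ intervalIntegrable_const ?_) <;> rw [uIoc_of_le hT]
  · filter_upwards [hmeas] with k hk
    exact (hk.aemeasurable.norm.pow_const q).aestronglyMeasurable
  · filter_upwards [hbound] with k hk
    refine Eventually.of_forall fun r hr => ?_
    rw [Real.norm_of_nonneg (Real.rpow_nonneg (norm_nonneg _) _)]
    exact Real.rpow_le_rpow (norm_nonneg _) (hk r (Ioc_subset_Icc_self hr)) hq
  · exact Eventually.of_forall fun r hr => hlim_pow r (Ioc_subset_Icc_self hr)

end PnormPow

section RightConvergence

variable {α : Type*} {F : Filter α} {d : ℕ}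

/-- Convergence of paths from the right: the paths `H k` are eventually measurable and uniformly
bounded, and `H k (y k) → η y` whenever `y k → y` with `y k ≥ y`. For a constant family `H` this
includes right continuity of `η`. -/
structure TendstoFromRight (H : α → ℝ → E d) (F : Filter α) (η : ℝ → E d) : Prop where
  measurable : ∀ᶠ k in F, Measurable (H k)
  bounded : ∃ K : ℝ, ∀ᶠ k in F, ∀ r, ‖H k r‖ ≤ K
  tendsto : ∀ y, Tendsto (fun z : α × ℝ => H z.1 z.2) (F ×ˢ 𝓝[≥] y) (𝓝 (η y))

theorem measurable_pcPath {i : ℕ} (sVec : Fin i → ℝ) (xVec : Fin i → E d) :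
    Measurable (pcPath sVec xVec) :=
  Finset.measurable_sum _ fun _ _ =>
    Measurable.ite measurableSet_Ici measurable_const measurable_const

theorem norm_pcPath_le {i : ℕ} (sVec : Fin i → ℝ) (xVec : Fin i → E d) (r : ℝ) :
    ‖pcPath sVec xVec r‖ ≤ ∑ j, ‖xVec j‖ :=
  norm_sum_le_of_le _ fun j _ => by split_ifs <;> simp

theorem eventually_le_iff_nhdsGE (c y : ℝ) : ∀ᶠ r in 𝓝[≥] y, (c ≤ r ↔ c ≤ y) := by
  by_cases hcy : c ≤ y
  · filter_upwards [self_mem_nhdsWithin] with r hr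
    exact iff_of_true (hcy.trans hr) hcy
  · filter_upwards [mem_nhdsWithin_of_mem_nhds (Iio_mem_nhds (not_le.1 hcy))] with r hr
    exact iff_of_false (not_le.2 hr) hcy

theorem tendstoFromRight_pcPath {i : ℕ} (sVec : Fin i → ℝ) {X : α → Fin i → E d}
    {xVec : Fin i → E d} (hX : Tendsto X F (𝓝 xVec)) :
    TendstoFromRight (fun k => pcPath sVec (X k)) F (pcPath sVec xVec) where
  measurable := Eventually.of_forall fun k => measurable_pcPath sVec (X k)
  bounded := by
    have hnorm : Tendsto (fun k => ∑ j, ‖X k j‖) F (𝓝 (∑ j, ‖xVec j‖)) :=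
      tendsto_finsetSum _ fun j _ => (tendsto_pi_nhds.1 hX j).norm
    refine ⟨∑ j, ‖xVec j‖ + 1, ?_⟩
    filter_upwards [hnorm.eventually_lt_const (lt_add_one _)] with k hk r
    exact (norm_pcPath_le sVec (X k) r).trans hk.le
  tendsto y := by
    refine tendsto_finsetSum _ fun j _ => ?_
    have hjump : Tendsto (fun z : α × ℝ => if sVec j ≤ y then X z.1 j else 0) (F ×ˢ 𝓝[≥] y)
        (𝓝 (if sVec j ≤ y then xVec j else 0)) := by
      split_ifs
      · exact (tendsto_pi_nhds.1 hX j).comp tendsto_fst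
      · exact tendsto_const_nhds
    refine hjump.congr' ?_
    filter_upwards [tendsto_snd.eventually (eventually_le_iff_nhdsGE (sVec j) y)] with z hz
    simp only [hz]

end RightConvergence

section Penalization

variable {T p s : ℝ} {d : ℕ}

theorem Phi_nonneg (hT : 0 ≤ T) (p s : ℝ) (η : ℝ → E d) (θ : Theta T d) (ℓ : ℝ → ℝ) :
    0 ≤ Phi T p s η θ ℓ :=
  add_nonneg (Real.rpow_nonneg (supId_nonneg _ _) _) (pnormPow_nonneg hT _ _)

theorem Theta.continuousOn_stopped (θ : Theta T d) :
    ContinuousOn (fun r => θ.path (min θ.t r)) (Icc 0 T) :=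
  θ.cont.comp (by fun_prop) fun _ hr =>
    ⟨le_min θ.ht.1 hr.1, (min_le_left _ _).trans θ.ht.2⟩

variable {α : Type*} {F : Filter α} {σ c : α → ℝ} {ℓ : ℝ → ℝ} {L : α → ℝ → ℝ}

theorem tendsto_supId (hc : Tendsto c F (𝓝 0)) (hℓ : MonotoneOn ℓ (Icc 0 T))
    (hL : ∀ᶠ k in F, MonotoneOn (L k) (Icc 0 T))
    (hLℓ : ∀ᶠ k in F, ∀ r ∈ Icc 0 T, |L k r - ℓ r| ≤ c k) :
    Tendsto (fun k => supId T (L k)) F (𝓝 (supId T ℓ)) := by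
  have hc_abs : Tendsto (fun k => |c k|) F (𝓝 0) := by simpa only [abs_zero] using hc.abs
  refine tendsto_iff_dist_tendsto_zero.2 (squeeze_zero' (.of_forall fun _ => dist_nonneg) ?_ hc_abs)
  filter_upwards [hL, hLℓ] with k hmono hle
  exact abs_supId_sub_supId_le (abs_nonneg _) hℓ hmono fun r hr => (hle r hr).trans (le_abs_self _)

theorem tendsto_pnormPow_timeChanged_sub_stopped [F.IsCountablyGenerated] (hT : 0 ≤ T) {q : ℝ}
    (hq : 0 ≤ q) {H : α → ℝ → E d} {η : ℝ → E d} (hH : TendstoFromRight H F η) (θ : Theta T d)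
    {G : α → ℝ → ℝ} {g : ℝ → ℝ} (hG : ∀ᶠ k in F, MonotoneOn (G k) (Icc 0 T))
    (hGg : ∀ r ∈ Icc 0 T, Tendsto (fun k => G k r) F (𝓝[≥] (g r))) :
    Tendsto (fun k => pnormPow T q fun r => H k (G k r) - θ.path (min θ.t r)) F
      (𝓝 (pnormPow T q fun r => η (g r) - θ.path (min θ.t r))) := by
  obtain ⟨C, hC⟩ := isCompact_Icc.exists_bound_of_continuousOn θ.continuousOn_stopped
  obtain ⟨K, hK⟩ := hH.bounded
  refine tendsto_pnormPow (K := K + C) hT hq ?_ ?_ fun r hr => ?_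
  · filter_upwards [hH.measurable, hG] with k hHk hGk
    have hG_meas : AEMeasurable (G k) (volume.restrict (Ioc 0 T)) :=
      aemeasurable_restrict_of_monotoneOn measurableSet_Ioc (hGk.mono Ioc_subset_Icc_self)
    have hθ_meas : AEMeasurable (fun r => θ.path (min θ.t r)) (volume.restrict (Ioc 0 T)) :=
      (θ.continuousOn_stopped.mono Ioc_subset_Icc_self).aemeasurable measurableSet_Ioc
    exact ((hHk.comp_aemeasurable hG_meas).sub hθ_meas).aestronglyMeasurable
  · filter_upwards [hK] with k hk r hr
    exact norm_sub_le_of_le (hk _) (hC r hr)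
  · exact ((hH.tendsto (g r)).comp (tendsto_id.prodMk (hGg r hr))).sub_const _

theorem tendsto_Phi [F.IsCountablyGenerated] (hT : 0 ≤ T) (hp : -1 < p)
    (hσ : Tendsto σ F (𝓝[≥] s)) {H : α → ℝ → E d} {η : ℝ → E d} (hH : TendstoFromRight H F η)
    (θ : Theta T d) (hc : Tendsto c F (𝓝 0)) (hℓ : MonotoneOn ℓ (Icc 0 T))
    (hL : ∀ᶠ k in F, MonotoneOn (L k) (Icc 0 T))
    (hLℓ : ∀ᶠ k in F, ∀ r ∈ Icc 0 T, ℓ r ≤ L k r ∧ L k r ≤ ℓ r + c k) :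
    Tendsto (fun k => Phi T p (σ k) (H k) θ (L k)) F (𝓝 (Phi T p s η θ ℓ)) := by
  have hexp : 0 ≤ 2 / (3 * p + 3) := div_nonneg zero_le_two (by linarith)
  have hdist : ∀ᶠ k in F, ∀ r ∈ Icc 0 T, |L k r - ℓ r| ≤ c k := by
    filter_upwards [hLℓ] with k hk r hr
    rw [abs_of_nonneg (sub_nonneg.2 (hk r hr).1)]
    linarith [(hk r hr).2]
  have hL_lim : ∀ r ∈ Icc 0 T, Tendsto (fun k => L k r) F (𝓝 (ℓ r)) := fun r hr => by
    refine tendsto_iff_dist_tendsto_zero.2 (squeeze_zero' (.of_forall fun _ => dist_nonneg) ?_ hc)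
    filter_upwards [hdist] with k hk using hk r hr
  rw [tendsto_nhdsWithin_iff] at hσ
  refine ((tendsto_supId hc hℓ hL hdist).rpow_const (Or.inr hexp)).add
    (tendsto_pnormPow_timeChanged_sub_stopped hT (by linarith) hH θ ?_ fun r hr =>
      tendsto_nhdsWithin_iff.2 ⟨hσ.1.min (hL_lim r hr), ?_⟩)
  · filter_upwards [hL] with k hk
    exact monotoneOn_const.min hk
  · filter_upwards [hσ.2, hLℓ] with k hσk hk
    exact min_le_min hσk (hk r hr).1

end Penalization

section Regularization

variable {T p s : ℝ} {d : ℕ} {u : Theta T d → ℝ} {M : ℝ}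

theorem sub_mul_Phi_le (hT : 0 ≤ T) (hM : ∀ θ, u θ ≤ M) (n : ℕ) (s : ℝ) (η : ℝ → E d)
    (θ : Theta T d) (ℓ : ℝ → ℝ) : u θ - n * Phi T p s η θ ℓ ≤ M :=
  (sub_le_self _ (mul_nonneg n.cast_nonneg (Phi_nonneg hT p s η θ ℓ))).trans (hM θ)

theorem le_reg (hT : 0 ≤ T) (hM : ∀ θ, u θ ≤ M) (n : ℕ) (η : ℝ → E d) {θ : Theta T d} {ℓ : ℝ → ℝ}
    (hθ : (θ.t, θ.path) ≠ (0, 0)) (hℓ : ℓ ∈ LL T θ.t s) :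
    u θ - n * Phi T p s η θ ℓ ≤ reg T p u n s η := by
  refine le_csSup ⟨M, ?_⟩ ⟨θ, ℓ, hθ, hℓ, rfl⟩
  rintro _ ⟨θ, ℓ, -, -, rfl⟩
  exact sub_mul_Phi_le hT hM n s η θ ℓ

theorem reg_le (hT : 0 ≤ T) (hM_nonneg : 0 ≤ M) (hM : ∀ θ, u θ ≤ M) (n : ℕ) (s : ℝ)
    (η : ℝ → E d) : reg T p u n s η ≤ M := by
  refine Real.sSup_le ?_ hM_nonneg
  rintro _ ⟨θ, ℓ, -, -, rfl⟩
  exact sub_mul_Phi_le hT hM n s η θ ℓ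

/-- The point `(t, 0)` of `Θ`: the zero path observed at time `t`. -/
def Theta.zeroPath (d : ℕ) {t : ℝ} (ht : t ∈ Icc 0 T) : Theta T d :=
  ⟨t, 0, ht, continuousOn_const, rfl⟩

theorem exists_lt_of_lt_reg (hT : 0 < T) (hs : 0 ≤ s) {n : ℕ} {η : ℝ → E d} {a : ℝ}
    (ha : a < reg T p u n s η) :
    ∃ θ : Theta T d, ∃ ℓ ∈ LL T θ.t s, a < u θ - n * Phi T p s η θ ℓ := by
  obtain ⟨ℓ₀, hℓ₀⟩ := LL_nonempty (right_mem_Ioc.2 hT) hs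
  obtain ⟨_, ⟨θ, ℓ, -, hℓ, rfl⟩, hlt⟩ := exists_lt_of_lt_csSup (by
    exact ⟨_, Theta.zeroPath d (right_mem_Icc.2 hT.le), ℓ₀,
      by simp [Theta.zeroPath, hT.ne'], hℓ₀, rfl⟩) ha
  exact ⟨θ, ℓ, hℓ, hlt⟩

end Regularization

section TimeZero

variable {T p : ℝ} {d : ℕ} {θ : Theta T d}

theorem Theta.stopped_eq_zero (hθ : θ.t = 0) {r : ℝ} (hr : 0 ≤ r) : θ.path (min θ.t r) = 0 := by
  rw [hθ, min_eq_left hr, θ.init]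

theorem dpDist_zeroPath (hp : p ≠ 0) (hθ : θ.t = 0) {t : ℝ} (ht : t ∈ Icc 0 T) :
    dpDist T p θ (Theta.zeroPath d ht) = t := by
  have hpaths : EqOn (fun r => θ.path (min θ.t r) -
      (Theta.zeroPath d ht).path (min (Theta.zeroPath d ht).t r)) 0 (Icc 0 T) := fun r hr => by
    simp [Theta.stopped_eq_zero hθ hr.1, Theta.zeroPath]
  rw [dpDist, pnorm_eq_zero_of_eqOn_zero (ht.1.trans ht.2) hp hpaths, add_zero, hθ, zero_sub,
    abs_neg]
  exact abs_of_nonneg ht.1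

theorem pnormPow_const_le_Phi (hT : 0 ≤ T) (hθ : θ.t = 0) {ℓ : ℝ → ℝ} (hℓ : ℓ ∈ LL T θ.t 0)
    (η : ℝ → E d) : pnormPow T (p + 1) (fun _ => η 0) ≤ Phi T p 0 η θ ℓ := by
  have hpaths : EqOn (fun _ => η 0) (fun r => η (min 0 (ℓ r)) - θ.path (min θ.t r)) (Icc 0 T) :=
    fun r hr => by
      dsimp only
      rw [min_eq_left (nonneg_of_mem_LL θ.ht le_rfl hℓ hr), Theta.stopped_eq_zero hθ hr.1, sub_zero]
  rw [pnormPow_congr hT hpaths]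
  exact le_add_of_nonneg_left (Real.rpow_nonneg (supId_nonneg T ℓ) _)

theorem Phi_zeroPath_le (hp : -1 < p) {t : ℝ} (ht : t ∈ Icc 0 T) {ℓ : ℝ → ℝ} (hℓ : ℓ ∈ LL T t 0)
    (η : ℝ → E d) : Phi T p 0 η (Theta.zeroPath d ht) ℓ ≤
      t ^ (2 / (3 * p + 3)) + pnormPow T (p + 1) (fun _ => η 0) := by
  have hsup : supId T ℓ ≤ t := supId_le ht.1 fun r hr => by
    rw [apply_of_mem_LL_zero hℓ, abs_le]
    split_ifs <;> constructor <;> linarith [hr.1, ht.1]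
  have hpaths : EqOn (fun r => η (min 0 (ℓ r)) -
      (Theta.zeroPath d ht).path (min (Theta.zeroPath d ht).t r)) (fun _ => η 0) (Icc 0 T) :=
    fun r hr => by simp [min_eq_left (nonneg_of_mem_LL ht le_rfl hℓ hr), Theta.zeroPath]
  rw [Phi, pnormPow_congr (ht.1.trans ht.2) hpaths]
  gcongr
  · exact supId_nonneg T ℓ
  · exact div_nonneg zero_le_two (by linarith)

/-- Lower semicontinuity of `u` with respect to the pseudo-distance `d_p`; `Theta` carries no
topology, so it is stated with `d_p`-balls. -/
def DpLowerSemicontinuous (T p : ℝ) {d : ℕ} (u : Theta T d → ℝ) : Prop :=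
  ∀ θ, ∀ a < u θ, ∃ δ > 0, ∀ θ', dpDist T p θ θ' < δ → a < u θ'

theorem dpLowerSemicontinuous_of_modulus {u : Theta T d → ℝ} {ρ : ℝ → ℝ} (hmono : Monotone ρ)
    (hρ : Tendsto ρ (𝓝[>] 0) (𝓝 0)) (hu : ∀ θ θ', |u θ - u θ'| ≤ ρ (dpDist T p θ θ')) :
    DpLowerSemicontinuous T p u := by
  intro θ a ha
  obtain ⟨δ, hρδ, hδ⟩ :=
    ((hρ.eventually_lt_const (sub_pos.2 ha)).and eventually_mem_nhdsWithin).exists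
  refine ⟨δ, hδ, fun θ' hθ' => ?_⟩
  linarith [hmono hθ'.le, hu θ θ', le_abs_self (u θ - u θ')]

theorem exists_pos_time_lt_of_time_zero {u : Theta T d → ℝ} (hT : 0 < T) (hp : 0 < p)
    (hu : DpLowerSemicontinuous T p u) {n : ℕ} {η : ℝ → E d} {ℓ : ℝ → ℝ} {a : ℝ} (hθ : θ.t = 0)
    (hℓ : ℓ ∈ LL T θ.t 0) (ha : a < u θ - n * Phi T p 0 η θ ℓ) :
    ∃ θ' : Theta T d, 0 < θ'.t ∧ ∃ ℓ' ∈ LL T θ'.t 0, a < u θ' - n * Phi T p 0 η θ' ℓ' := by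
  set P := pnormPow T (p + 1) (fun _ => η 0)
  have haP : a + n * P < u θ := by
    have := mul_le_mul_of_nonneg_left (pnormPow_const_le_Phi (p := p) hT.le hθ hℓ η)
      (n.cast_nonneg (α := ℝ))
    linarith
  obtain ⟨b, hab, hbu⟩ := exists_between haP
  obtain ⟨δ, hδ, hball⟩ := hu θ b hbu
  have hexp : 0 < 2 / (3 * p + 3) := by positivity
  have hpow : Tendsto (fun t : ℝ => n * t ^ (2 / (3 * p + 3))) (𝓝 0) (𝓝 0) :=
    ((Real.continuous_rpow_const hexp.le).const_mul (n : ℝ)).tendsto' 0 0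
      (by simp [Real.zero_rpow hexp.ne'])
  have hpow_small : ∀ᶠ t : ℝ in 𝓝[>] 0, n * t ^ (2 / (3 * p + 3)) < b - (a + n * P) :=
    (hpow.mono_left nhdsWithin_le_nhds).eventually_lt_const (sub_pos.2 hab)
  obtain ⟨t, hpow_lt, htδ, ht⟩ :=
    (hpow_small.and (inter_mem (Ioo_mem_nhdsGT hδ) (Ioc_mem_nhdsGT hT))).exists
  have htT : t ∈ Icc 0 T := Ioc_subset_Icc_self ht
  obtain ⟨ℓ', hℓ'⟩ := LL_nonempty ht le_rfl
  refine ⟨Theta.zeroPath d htT, ht.1, ℓ', hℓ', ?_⟩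
  have hut := hball (Theta.zeroPath d htT) ((dpDist_zeroPath hp.ne' hθ htT).trans_lt htδ.2)
  have hPhi := mul_le_mul_of_nonneg_left
    (Phi_zeroPath_le (p := p) (by linarith) htT hℓ' η) (n.cast_nonneg (α := ℝ))
  rw [mul_add] at hPhi
  linarith

theorem exists_pos_time_lt_of_lt_reg {u : Theta T d → ℝ} (hT : 0 < T) (hp : 0 < p)
    (hu : DpLowerSemicontinuous T p u) {n : ℕ} {s : ℝ} (hs : 0 ≤ s) {η : ℝ → E d} {a : ℝ}
    (ha : a < reg T p u n s η) :
    ∃ θ : Theta T d, 0 < θ.t ∧ ∃ ℓ ∈ LL T θ.t s, a < u θ - n * Phi T p s η θ ℓ := by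
  obtain ⟨θ, ℓ, hℓ, hlt⟩ := exists_lt_of_lt_reg hT hs ha
  rcases θ.ht.1.eq_or_lt with hθ | hθ
  · obtain rfl : s = 0 := eq_zero_of_mem_LL_time_zero hT.le hs (hθ ▸ hℓ)
    exact exists_pos_time_lt_of_time_zero hT hp hu hθ.symm hℓ hlt
  · exact ⟨θ, hθ, ℓ, hℓ, hlt⟩

end TimeZero

section LowerSemicontinuity

variable {T p s : ℝ} {d : ℕ} {u : Theta T d → ℝ} {α : Type*} {F : Filter α} {σ : α → ℝ}
  {H : α → ℝ → E d} {η : ℝ → E d}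

theorem tendsto_Phi_advance [F.IsCountablyGenerated] (hp : -1 < p) (hs : 0 ≤ s)
    (hσ : Tendsto σ F (𝓝[>] s)) (hH : TendstoFromRight H F η) {θ : Theta T d} (hθ : 0 < θ.t)
    {ℓ : ℝ → ℝ} (hℓ : ℓ ∈ LL T θ.t s) :
    Tendsto (fun k => Phi T p (σ k) (H k) θ (advance θ.t (σ k - s) ℓ)) F
      (𝓝 (Phi T p s η θ ℓ)) := by
  have hc : Tendsto (fun k => σ k - s) F (𝓝 0) := by
    simpa only [sub_self] using (hσ.mono_right nhdsWithin_le_nhds).sub_const s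
  have hgt : ∀ᶠ k in F, s < σ k := hσ.eventually eventually_mem_nhdsWithin
  refine tendsto_Phi (θ.ht.1.trans θ.ht.2) hp
    (hσ.mono_right (nhdsWithin_mono s Ioi_subset_Ici_self)) hH θ hc
    (monotoneOn_of_mem_LL hs hℓ) ?_ ?_
  · filter_upwards [hgt] with k hk
    exact monotoneOn_of_mem_LL (by linarith)
      (advance_mem_LL ⟨hθ, θ.ht.2⟩ hs (sub_pos.2 hk) hℓ)
  · filter_upwards [hgt] with k hk r hr
    exact ⟨le_advance hθ (sub_nonneg.2 hk.le) hr.1, advance_le hθ (sub_nonneg.2 hk.le) r⟩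

theorem eventually_lt_reg [F.IsCountablyGenerated] (hT : 0 < T) (hp : 0 < p)
    (hbdd : BddAbove (range u)) (hu : DpLowerSemicontinuous T p u) (hs : 0 ≤ s)
    (hσ : Tendsto σ F (𝓝[>] s)) (hH : TendstoFromRight H F η) {n : ℕ} {a : ℝ}
    (ha : a < reg T p u n s η) : ∀ᶠ k in F, a < reg T p u n (σ k) (H k) := by
  obtain ⟨M, hM⟩ := hbdd
  obtain ⟨θ, hθ, ℓ, hℓ, hlt⟩ := exists_pos_time_lt_of_lt_reg hT hp hu hs ha
  have hPhi := tendsto_Phi_advance (p := p) (by linarith) hs hσ hH hθ hℓ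
  have hlim := (hPhi.const_mul (n : ℝ)).const_sub (u θ)
  filter_upwards [hlim.eventually_const_lt hlt, hσ.eventually eventually_mem_nhdsWithin]
    with k hk hgt
  have hmem := advance_mem_LL ⟨hθ, θ.ht.2⟩ hs (sub_pos.2 hgt) hℓ
  rw [add_sub_cancel] at hmem
  exact hk.trans_le (le_reg hT.le (fun θ => hM (mem_range_self θ)) n (H k)
    (fun h => hθ.ne' (Prod.ext_iff.1 h).1) hmem)

theorem stmt10_general [F.NeBot] [F.IsCountablyGenerated] (hT : 0 < T) (hp : 0 < p)
    (hbdd : BddAbove (range u)) (hu : DpLowerSemicontinuous T p u) (n : ℕ) (hs : 0 ≤ s)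
    (hσ : Tendsto σ F (𝓝[>] s)) (hH : TendstoFromRight H F η) :
    reg T p u n s η ≤ liminf (fun k => reg T p u n (σ k) (H k)) F := by
  obtain ⟨M, hM⟩ := hbdd
  have hcobdd : F.IsCoboundedUnder (· ≥ ·) fun k => reg T p u n (σ k) (H k) :=
    (isBoundedUnder_of ⟨max M 0, fun k => reg_le hT.le (le_max_right M 0)
      (fun θ => (hM (mem_range_self θ)).trans (le_max_left M 0)) n _ _⟩).isCoboundedUnder_ge
  refine le_of_forall_lt_imp_le_of_dense fun a ha => le_liminf_of_le hcobdd ?_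
  exact (eventually_lt_reg hT hp ⟨M, hM⟩ hu hs hσ hH ha).mono fun _ => le_of_lt

end LowerSemicontinuity

/-- (Lemma 5.7 (iii)) For bounded, `d_p`-uniformly continuous `u`, the function
`u^{n,λ_i}` is lower semicontinuous at the initial time `s_i`:
`u^{n,λ_i}(s_i, x) ≤ liminf_{s' ↓ s_i, x' → x} u^{n,λ_i}(s', x')`. -/
theorem stmt10 (T : ℝ) (hT : 0 < T) (d : ℕ) (hd : 1 ≤ d) (p : ℝ) (hp : 1 ≤ p)
    (u : Theta T d → ℝ) (hub : ∃ M : ℝ, ∀ θ : Theta T d, |u θ| ≤ M)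
    (ρ : ℝ → ℝ) (hmono : Monotone ρ)
    (hρ0 : Filter.Tendsto ρ (nhdsWithin 0 (Set.Ioi 0)) (𝓝 0))
    (huc : ∀ θ θ' : Theta T d, |u θ - u θ'| ≤ ρ (dpDist T p θ θ'))
    (n : ℕ) (hn : 1 ≤ n)
    (m : ℕ) (sVec : Fin (m + 1) → ℝ) (hs0 : sVec 0 = 0) (hsmono : StrictMono sVec)
    (hsT : sVec (Fin.last m) ≤ T) (xs : Fin m → E d) (x : E d) :
    reg T p u n (sVec (Fin.last m)) (pcPath sVec (Fin.snoc xs x)) ≤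
      Filter.liminf
        (fun q : ℝ × E d => reg T p u n q.1 (pcPath sVec (Fin.snoc xs q.2)))
        ((nhdsWithin (sVec (Fin.last m)) (Set.Ioi (sVec (Fin.last m)))) ×ˢ (𝓝 x)) := by
  obtain ⟨M, hM⟩ := hub
  exact stmt10_general hT (zero_lt_one.trans_le hp)
    ⟨M, forall_mem_range.2 fun θ => (le_abs_self _).trans (hM θ)⟩
    (dpLowerSemicontinuous_of_modulus hmono hρ0 huc) n (hs0 ▸ hsmono.monotone (Fin.zero_le _))
    tendsto_fst (tendstoFromRight_pcPath sVec (tendsto_const_nhds.finSnoc tendsto_snd))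
end
end

section
/- (Piecewise-constant time-change L^p estimate) Let T > 0, p ≥ 1, δ ≥ 0, let 0 ≤ s_1 < ⋯ < s_i ≤ T and x_1, …, x_i ∈ ℝ^d, and let ℓ : [0,T] → ℝ be nondecreasing with sup_{t∈[0,T]} |ℓ(t) − t| ≤ δ. Then ∫_0^T | Σ_{j=1}^i x_j ( 1_{{t ≥ s_j}} − 1_{{ℓ(t) ≥ s_j}} ) |^p dt ≤ i^p |x_i|_p^p δ, where |x_i|_p^p := Σ_{j=1}^i |x_j|^p. -/
open MeasureTheory Set

noncomputable section

/-!
For a fixed jump time `s`, the indicators of `s ≤ t` and `s ≤ ℓ t` can differ in two ways: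
`t < s ≤ ℓ t`, which forces `s - δ ≤ t < s`, or `ℓ t < s ≤ t`, which forces `s ≤ t < s + δ`.
As `ℓ` is monotone, the two never both occur for the same `s`, so the times of disagreement lie
in a single interval of length `δ`, and not merely in one of length `2 * δ`. The `j`-th summand
is therefore bounded by `‖x j‖` times the indicator of such an interval, and the power mean
inequality `‖∑ j, y j‖ ^ p ≤ n ^ (p - 1) * ∑ j, ‖y j‖ ^ p` followed by integration gives the
estimate.
-/

lemma exists_setOf_not_le_iff_le_subset_Ico {G : Type*} [AddCommGroup G] [LinearOrder G]
    [IsOrderedAddMonoid G] {S : Set G} {ℓ : G → G} {δ : G} (hmono : MonotoneOn ℓ S)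
    (hclose : ∀ t ∈ S, |ℓ t - t| ≤ δ) (s : G) :
    ∃ a, {t ∈ S | ¬(s ≤ t ↔ s ≤ ℓ t)} ⊆ Ico a (a + δ) := by
  by_cases hearly : ∃ u ∈ S, u < s ∧ s ≤ ℓ u
  · obtain ⟨u, huS, hus, hsu⟩ := hearly
    refine ⟨s - δ, fun t ⟨htS, hne⟩ ↦ ?_⟩
    have ht : t < s := by
      by_contra! hst
      exact hne (iff_of_true hst (hsu.trans (hmono huS htS (hus.le.trans hst))))
    have hℓt : s ≤ ℓ t := by
      by_contra hlt
      exact hne (iff_of_false ht.not_ge hlt)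
    have hbound : ℓ t ≤ t + δ := sub_le_iff_le_add'.1 (abs_sub_le_iff.1 (hclose t htS)).1
    exact ⟨sub_le_iff_le_add.2 (hℓt.trans hbound), by rwa [sub_add_cancel]⟩
  · push Not at hearly
    refine ⟨s, fun t ⟨htS, hne⟩ ↦ ?_⟩
    have ht : s ≤ t := by
      by_contra! hts
      exact hne (iff_of_false hts.not_ge (hearly t htS hts).not_ge)
    have hℓt : ℓ t < s := by
      by_contra! hge
      exact hne (iff_of_true ht hge)
    have hbound : t ≤ ℓ t + δ := sub_le_iff_le_add'.1 (abs_sub_le_iff.1 (hclose t htS)).2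
    exact ⟨ht, hbound.trans_lt (by gcongr)⟩

section Seminormed

variable {ι F : Type*} [Fintype ι] [SeminormedAddCommGroup F] {p : ℝ}

lemma norm_sum_rpow_le_card_rpow_mul_sum (hp : 1 ≤ p) (y : ι → F) :
    ‖∑ j, y j‖ ^ p ≤ (Fintype.card ι : ℝ) ^ (p - 1) * ∑ j, ‖y j‖ ^ p :=
  calc ‖∑ j, y j‖ ^ p ≤ (∑ j, ‖y j‖) ^ p := by
        gcongr
        exact norm_sum_le _ _
    _ ≤ (Fintype.card ι : ℝ) ^ (p - 1) * ∑ j, ‖y j‖ ^ p :=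
        Real.rpow_sum_le_const_mul_sum_rpow_of_nonneg _ hp fun _ _ ↦ norm_nonneg _

lemma integral_norm_sum_rpow_le_of_le_indicator {α : Type*} [MeasurableSpace α] {μ : Measure α}
    (hp : 1 ≤ p) {A : ι → Set α} (hA : ∀ j, MeasurableSet (A j)) (hμA : ∀ j, μ (A j) ≠ ⊤)
    {f : ι → α → F} {b : ι → ℝ}
    (hf : ∀ᵐ t ∂μ, ∀ j, ‖f j t‖ ≤ (A j).indicator (fun _ ↦ b j) t) :
    ∫ t, ‖∑ j, f j t‖ ^ p ∂μ ≤
      (Fintype.card ι : ℝ) ^ (p - 1) * ∑ j, b j ^ p * μ.real (A j) := by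
  have hp₀ : 0 < p := zero_lt_one.trans_le hp
  have hint (j : ι) : Integrable ((A j).indicator fun _ ↦ b j ^ p) μ :=
    (integrable_indicator_iff (hA j)).2 (integrableOn_const (hμA j))
  have hpointwise : ∀ᵐ t ∂μ, ‖∑ j, f j t‖ ^ p ≤
      (Fintype.card ι : ℝ) ^ (p - 1) * ∑ j, (A j).indicator (fun _ ↦ b j ^ p) t := by
    filter_upwards [hf] with t ht
    refine (norm_sum_rpow_le_card_rpow_mul_sum hp _).trans ?_
    gcongr with j
    calc ‖f j t‖ ^ p ≤ (A j).indicator (fun _ ↦ b j) t ^ p := by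
          gcongr
          exact ht j
      _ = (A j).indicator (fun _ ↦ b j ^ p) t := by
          by_cases htA : t ∈ A j <;> simp [htA, Real.zero_rpow hp₀.ne']
  calc ∫ t, ‖∑ j, f j t‖ ^ p ∂μ
      ≤ ∫ t, (Fintype.card ι : ℝ) ^ (p - 1) * ∑ j, (A j).indicator (fun _ ↦ b j ^ p) t ∂μ :=
        integral_mono_of_nonneg (.of_forall fun t ↦ by positivity)
          ((integrable_finsetSum _ fun j _ ↦ hint j).const_mul _) hpointwise
    _ = (Fintype.card ι : ℝ) ^ (p - 1) * ∑ j, b j ^ p * μ.real (A j) := by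
        rw [integral_const_mul, integral_finsetSum _ fun j _ ↦ hint j]
        simp only [integral_indicator_const _ (hA _), smul_eq_mul, mul_comm]

end Seminormed

lemma norm_ite_sub_ite_smul_le_indicator {α F : Type*} [SeminormedAddCommGroup F]
    [NormedSpace ℝ F] {P Q : Prop} [Decidable P] [Decidable Q] {A : Set α} {t : α}
    (h : ¬(P ↔ Q) → t ∈ A) (x : F) :
    ‖((if P then (1 : ℝ) else 0) - (if Q then (1 : ℝ) else 0)) • x‖ ≤
      A.indicator (fun _ ↦ ‖x‖) t := by
  by_cases hPQ : P ↔ Q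
  · simpa [hPQ] using indicator_nonneg (fun _ _ ↦ norm_nonneg x) t
  · rw [indicator_of_mem (h hPQ)]
    by_cases hP : P <;> by_cases hQ : Q <;> simp_all

theorem stmt15_general {ι F : Type*} [Fintype ι] [SeminormedAddCommGroup F] [NormedSpace ℝ F]
    {S : Set ℝ} (hS : MeasurableSet S) {p : ℝ} (hp : 1 ≤ p) {δ : ℝ} (hδ : 0 ≤ δ)
    (s : ι → ℝ) (x : ι → F) {ℓ : ℝ → ℝ} (hmono : MonotoneOn ℓ S)
    (hclose : ∀ t ∈ S, |ℓ t - t| ≤ δ) :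
    (∫ t in S, ‖∑ j, ((if s j ≤ t then (1 : ℝ) else 0) - (if s j ≤ ℓ t then (1 : ℝ) else 0))
        • x j‖ ^ p) ≤
      (Fintype.card ι : ℝ) ^ (p - 1) * (∑ j, ‖x j‖ ^ p) * δ := by
  choose a ha using fun j ↦ exists_setOf_not_le_iff_le_subset_Ico hmono hclose (s j)
  have hlength (j : ι) : (volume.restrict S).real (Ico (a j) (a j + δ)) ≤ δ :=
    calc (volume.restrict S).real (Ico (a j) (a j + δ)) ≤ volume.real (Ico (a j) (a j + δ)) :=
          ENNReal.toReal_mono measure_Ico_lt_top.ne (Measure.restrict_apply_le _ _)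
      _ = δ := by simp [hδ]
  calc _ ≤ (Fintype.card ι : ℝ) ^ (p - 1) *
        ∑ j, ‖x j‖ ^ p * (volume.restrict S).real (Ico (a j) (a j + δ)) := by
        refine integral_norm_sum_rpow_le_of_le_indicator hp (fun _ ↦ measurableSet_Ico)
          (fun _ ↦ measure_Ico_lt_top.ne) ?_
        filter_upwards [ae_restrict_mem hS] with t ht j
        exact norm_ite_sub_ite_smul_le_indicator (fun hne ↦ ha j ⟨ht, hne⟩) (x j)
    _ ≤ (Fintype.card ι : ℝ) ^ (p - 1) * (∑ j, ‖x j‖ ^ p) * δ := by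
        rw [mul_assoc, Finset.sum_mul]
        gcongr with j
        exact hlength j

/-- (Piecewise-constant time-change `L^p` estimate) For `0 ≤ s_1 < ⋯ < s_i ≤ T`,
`x_1,…,x_i ∈ ℝ^d`, and a nondecreasing `ℓ : [0,T] → ℝ` with `sup |ℓ - I| ≤ δ`:
`∫_0^T |Σ_j x_j (1_{{t ≥ s_j}} - 1_{{ℓ(t) ≥ s_j}})|^p dt ≤ i^p |x_i|_p^p δ`. -/
theorem stmt15 (T : ℝ) (hT : 0 < T) (p : ℝ) (hp : 1 ≤ p) (d : ℕ) (hd : 1 ≤ d)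
    (δ : ℝ) (hδ : 0 ≤ δ) (i : ℕ) (hi : 1 ≤ i)
    (sVec : Fin i → ℝ) (xVec : Fin i → E d)
    (hsmono : StrictMono sVec) (hsIcc : ∀ j, sVec j ∈ Set.Icc (0:ℝ) T)
    (ℓ : ℝ → ℝ) (hmono : MonotoneOn ℓ (Set.Icc 0 T))
    (hclose : ∀ t ∈ Set.Icc (0:ℝ) T, |ℓ t - t| ≤ δ) :
    (∫ t in (0:ℝ)..T,
        ‖∑ j, ((if sVec j ≤ t then (1:ℝ) else 0) - (if sVec j ≤ ℓ t then (1:ℝ) else 0))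
            • xVec j‖ ^ p) ≤
      (i : ℝ) ^ p * (∑ j, ‖xVec j‖ ^ p) * δ := by
  rw [intervalIntegral.integral_of_le hT.le]
  refine (stmt15_general measurableSet_Ioc hp hδ sVec xVec (hmono.mono Ioc_subset_Icc_self)
    fun t ht ↦ hclose t (Ioc_subset_Icc_self ht)).trans ?_
  rw [Fintype.card_fin]
  gcongr
  · exact_mod_cast hi
  · exact sub_le_self p zero_le_one
end
end
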